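/- Let p > 0 and ν ∈ ℂ. Set X(x) = p^(1/(p+1)) x^(p/(p+1)) and B₁ = (2 + 12ν² − 12ν(p−1) − 7p + 2p²)/(24(p+1)). Then, as x → +∞, F_{p,ν}(x) = √(2π/((p+1)X(x))) · (x/p)^(ν/(p+1)) · exp(−(p+1)(x/p)^(p/(p+1))) · (1 + B₁/X(x) + O(X(x)^{−2})). -/

import Mathlib

open MeasureTheory Set Filter Asymptotics

/-!
The substitution `t = (x / p) ^ (1 / (p + 1)) * exp u` turns Krätzel's integral into the Laplace
integral `∫ exp (ν u) exp (-X f u) du`, whose phase `f u = (exp (p u) - 1) / p + exp (-u) - 1` has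
its minimum at `u = 0`. Write `f u = u² q u` with `q` entire. Rescaling by `u = ε s` with
`ε = X ^ (-1/2)` replaces the integrand by `G ε s = exp (ν ε s) exp (-s² q (ε s))`, which is entire
in `ε`. Since `G (-ε) s = G ε (-s)`, only the even Taylor coefficients in `ε` survive integration
over `s`. Cauchy's estimates on the disc of radius `δ / (1 + |s|)`, where `G` is exponentially small
in `s`, bound the fourth-order remainder by a multiple of `(1 + |s|) ^ 4 * exp (-κ |s|) * ε ^ 4`,
which is integrable in `s`; Gaussian moments evaluate the coefficients of `1` and `ε² = 1 / X`.
-/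

open Metric
open scoped Nat Topology

/-! ### Taylor remainders and divided differences -/

lemma norm_taylor_term_le {E : Type*} [NormedAddCommGroup E] [NormedSpace ℂ E]
    [CompleteSpace E] {f : ℂ → E} {c : ℂ} {ρ M : ℝ} (hρ : 0 < ρ) (hf : DiffContOnCl ℂ f (ball c ρ))
    (hsphere : ∀ w ∈ sphere c ρ, ‖f w‖ ≤ M) (z : ℂ) (k : ℕ) :
    ‖(k ! : ℂ)⁻¹ • (z - c) ^ k • iteratedDeriv k f c‖ ≤ M * (‖z - c‖ / ρ) ^ k := by
  have hcauchy := Complex.norm_iteratedDeriv_le_of_forall_mem_sphere_norm_le k hρ hf hsphere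
  rw [norm_smul, norm_smul, norm_inv, norm_pow, Complex.norm_natCast]
  calc (k ! : ℝ)⁻¹ * (‖z - c‖ ^ k * ‖iteratedDeriv k f c‖)
      ≤ (k ! : ℝ)⁻¹ * (‖z - c‖ ^ k * (k ! * M / ρ ^ k)) := by gcongr
    _ = M * (‖z - c‖ / ρ) ^ k := by
      rw [div_pow]
      field_simp

theorem norm_sub_taylorSum_le {E : Type*} [NormedAddCommGroup E] [NormedSpace ℂ E]
    [CompleteSpace E] {f : ℂ → E} {c z : ℂ} {ρ M : ℝ} (hρ : 0 < ρ)
    (hf : DiffContOnCl ℂ f (ball c ρ)) (hsphere : ∀ w ∈ sphere c ρ, ‖f w‖ ≤ M)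
    (hz : ‖f z‖ ≤ M) (n : ℕ) :
    ‖f z - ∑ k ∈ Finset.range n, (k ! : ℂ)⁻¹ • (z - c) ^ k • iteratedDeriv k f c‖ ≤
      3 * M * (2 * (‖z - c‖ / ρ)) ^ n := by
  set r := ‖z - c‖ / ρ
  have hM : 0 ≤ M := (norm_nonneg _).trans hz
  have hr0 : 0 ≤ r := by positivity
  have hterm (k : ℕ) : ‖(k ! : ℂ)⁻¹ • (z - c) ^ k • iteratedDeriv k f c‖ ≤ M * r ^ k :=
    norm_taylor_term_le hρ hf hsphere z k
  rcases le_total r (1 / 2) with hr | hr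
  · have hzball : z ∈ ball c ρ := by
      rw [mem_ball_iff_norm, ← div_lt_one hρ]
      exact hr.trans_lt (by norm_num)
    have hgeom := norm_sub_le_of_geometric_bound_of_hasSum (hr.trans_lt (by norm_num)) hterm
      (Complex.hasSum_taylorSeries_on_ball hf.differentiableOn hzball) n
    rw [norm_sub_rev]
    calc _ ≤ M * r ^ n / (1 - r) := hgeom
      _ ≤ M * r ^ n / (1 / 2) := by gcongr; linarith
      _ = 2 * (M * r ^ n) := by ring
      _ ≤ 3 * M * (2 * r) ^ n := by
        have : r ^ n ≤ (2 * r) ^ n := by gcongr; linarith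
        nlinarith [mul_le_mul_of_nonneg_left this hM, mul_nonneg hM (pow_nonneg hr0 n)]
  · have h2r : 1 ≤ 2 * r := by linarith
    have hsum : ‖∑ k ∈ Finset.range n, (k ! : ℂ)⁻¹ • (z - c) ^ k • iteratedDeriv k f c‖ ≤
        2 * (M * (2 * r) ^ n) :=
      calc _ ≤ ∑ k ∈ Finset.range n, M * r ^ k := norm_sum_le_of_le _ fun k _ => hterm k
        _ = ∑ k ∈ Finset.range n, (1 / 2 : ℝ) ^ k * (M * (2 * r) ^ k) := by
          refine Finset.sum_congr rfl fun k _ => ?_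
          rw [mul_left_comm, ← mul_pow]
          ring
        _ ≤ ∑ k ∈ Finset.range n, (1 / 2 : ℝ) ^ k * (M * (2 * r) ^ n) := by
          gcongr with k hk
          exact (Finset.mem_range.1 hk).le
        _ ≤ 2 * (M * (2 * r) ^ n) := by
          rw [← Finset.sum_mul]
          gcongr
          exact sum_geometric_two_le n
    have hone : M ≤ M * (2 * r) ^ n := le_mul_of_one_le_right hM (one_le_pow₀ h2r)
    linarith [norm_sub_le (f z)
      (∑ k ∈ Finset.range n, (k ! : ℂ)⁻¹ • (z - c) ^ k • iteratedDeriv k f c)]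

lemma norm_add_comp_neg_sub_taylor_le {f : ℂ → ℂ} {ρ M : ℝ} (hρ : 0 < ρ)
    (hf : DiffContOnCl ℂ f (ball 0 ρ)) (hsphere : ∀ w ∈ sphere 0 ρ, ‖f w‖ ≤ M) {z : ℂ}
    (hz : ‖f z‖ ≤ M) (hnegz : ‖f (-z)‖ ≤ M) :
    ‖f z + f (-z) - 2 * f 0 - z ^ 2 * iteratedDeriv 2 f 0‖ ≤ 96 * M * (‖z‖ / ρ) ^ 4 := by
  have hpos := norm_sub_taylorSum_le hρ hf hsphere hz 4
  have hneg := norm_sub_taylorSum_le hρ hf hsphere hnegz 4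
  rw [sub_zero] at hpos hneg
  rw [norm_neg] at hneg
  refine (le_of_eq ?_).trans ((norm_add_le_of_le hpos hneg).trans_eq ?_)
  · congr 1
    simp only [Finset.sum_range_succ, Finset.sum_range_zero, smul_eq_mul, iteratedDeriv_zero]
    norm_num [Nat.factorial]
    ring
  · ring

theorem iteratedDeriv_dslope {𝕜 : Type*} [NontriviallyNormedField 𝕜] [CompleteSpace 𝕜]
    [CharZero 𝕜] {f : 𝕜 → 𝕜} {a : 𝕜} (hf : AnalyticAt 𝕜 f a) (n : ℕ) :
    iteratedDeriv n (dslope f a) a = iteratedDeriv (n + 1) f a / (n + 1) := by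
  have hslope := hf.hasFPowerSeriesAt.has_fpower_series_dslope_fslope
  have hcoeff := congrArg (fun p => FormalMultilinearSeries.coeff p n)
    (hslope.analyticAt.hasFPowerSeriesAt.eq_formalMultilinearSeries hslope)
  simp only [FormalMultilinearSeries.coeff_ofScalars, FormalMultilinearSeries.coeff_fslope,
    Nat.factorial_succ, Nat.cast_mul, Nat.cast_succ] at hcoeff
  have hn : (n ! : 𝕜) ≠ 0 := mod_cast n.factorial_ne_zero
  field_simp at hcoeff ⊢
  exact hcoeff

lemma differentiable_dslope {E : Type*} [NormedAddCommGroup E] [NormedSpace ℂ E]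
    [CompleteSpace E] {f : ℂ → E} (hf : Differentiable ℂ f) (a : ℂ) :
    Differentiable ℂ (dslope f a) := by
  rw [← differentiableOn_univ] at hf ⊢
  exact (Complex.differentiableOn_dslope univ_mem).2 hf

lemma iteratedDeriv_dslope_dslope {𝕜 : Type*} [NontriviallyNormedField 𝕜] [CompleteSpace 𝕜]
    [CharZero 𝕜] {f : 𝕜 → 𝕜} {a : 𝕜} (hf : AnalyticAt 𝕜 f a) (n : ℕ) :
    iteratedDeriv n (dslope (dslope f a) a) a =
      iteratedDeriv (n + 2) f a / ((n + 1) * (n + 2)) := by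
  have hslope := hf.hasFPowerSeriesAt.has_fpower_series_dslope_fslope.analyticAt
  rw [iteratedDeriv_dslope hslope, iteratedDeriv_dslope hf]
  push_cast
  rw [add_assoc (n : 𝕜), one_add_one_eq_two]
  field_simp

lemma sub_sq_smul_dslope_dslope {𝕜 E : Type*} [NontriviallyNormedField 𝕜]
    [NormedAddCommGroup E] [NormedSpace 𝕜 E] {f : 𝕜 → E} {a : 𝕜} (hfa : f a = 0)
    (hf'a : deriv f a = 0) (u : 𝕜) : (u - a) ^ 2 • dslope (dslope f a) a u = f u := by
  have hsecond := sub_smul_dslope (dslope f a) a u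
  rw [dslope_same, hf'a, sub_zero] at hsecond
  rw [sq, mul_smul, hsecond, sub_smul_dslope, hfa, sub_zero]

/-! ### Gaussian moments -/

lemma integral_pow_even_mul_exp_neg_mul_sq {b : ℝ} (hb : 0 < b) (k : ℕ) :
    ∫ s : ℝ, s ^ (2 * k) * Real.exp (-b * s ^ 2) =
      (2 * k - 1 : ℕ)‼ / (2 * b) ^ k * √(Real.pi / b) := by
  have hhalf : ∫ s in Ioi (0 : ℝ), s ^ (2 * k) * Real.exp (-b * s ^ 2) =
      b ^ (-((2 * k + 1) / 2) : ℝ) * (1 / 2) * Real.Gamma (k + 1 / 2) := by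
    have h := integral_rpow_mul_exp_neg_mul_rpow (p := 2) (q := (2 * k : ℕ)) (b := b) two_pos
      (neg_one_lt_zero.trans_le (Nat.cast_nonneg _)) hb
    simp only [Real.rpow_natCast, Real.rpow_two] at h
    rw [h]
    congr 2
    · push_cast; ring_nf
    · push_cast; ring
  have hpow : b ^ (-((2 * k + 1) / 2) : ℝ) = (b ^ k * √b)⁻¹ := by
    rw [Real.rpow_neg hb.le, Real.sqrt_eq_rpow, ← Real.rpow_natCast, ← Real.rpow_add hb]
    ring_nf
  calc ∫ s : ℝ, s ^ (2 * k) * Real.exp (-b * s ^ 2)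
      = ∫ s : ℝ, |s| ^ (2 * k) * Real.exp (-b * |s| ^ 2) := by
        simp only [(even_two_mul k).pow_abs, sq_abs]
    _ = 2 * ∫ s in Ioi (0 : ℝ), s ^ (2 * k) * Real.exp (-b * s ^ 2) :=
        integral_comp_abs (f := fun s => s ^ (2 * k) * Real.exp (-b * s ^ 2))
    _ = (2 * k - 1 : ℕ)‼ / (2 * b) ^ k * √(Real.pi / b) := by
        rw [hhalf, hpow, Real.Gamma_nat_add_half, Real.sqrt_div Real.pi_pos.le,
          mul_pow]
        field_simp

lemma integrable_pow_mul_exp_neg_mul_sq {b : ℝ} (hb : 0 < b) (n : ℕ) :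
    Integrable fun s : ℝ => s ^ n * Real.exp (-b * s ^ 2) := by
  simpa only [Real.rpow_natCast] using
    integrable_rpow_mul_exp_neg_mul_sq hb (neg_one_lt_zero.trans_le (Nat.cast_nonneg n))

lemma integrable_one_add_abs_pow_mul_exp_neg {κ : ℝ} (hκ : 0 < κ) (n : ℕ) :
    Integrable fun s : ℝ => (1 + |s|) ^ n * Real.exp (-κ * |s|) := by
  have hjap : Integrable fun s : ℝ => (1 + ‖s‖) ^ (-2 : ℝ) := integrable_one_add_norm (by simp)
  refine (hjap.const_mul ((n + 2)! / κ ^ (n + 2) * Real.exp κ)).mono'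
    (by fun_prop) (Eventually.of_forall fun s => ?_)
  have hs : 0 < 1 + |s| := by positivity
  have hexp : Real.exp (-κ * |s|) = Real.exp κ / Real.exp (κ * (1 + |s|)) := by
    rw [← Real.exp_sub]
    ring_nf
  have htaylor := Real.pow_div_factorial_le_exp (κ * (1 + |s|)) (by positivity) (n + 2)
  rw [Real.norm_of_nonneg (by positivity), Real.norm_eq_abs, Real.rpow_neg hs.le, Real.rpow_two,
    hexp]
  calc (1 + |s|) ^ n * (Real.exp κ / Real.exp (κ * (1 + |s|)))
      ≤ (1 + |s|) ^ n * (Real.exp κ / ((κ * (1 + |s|)) ^ (n + 2) / (n + 2)!)) := by gcongr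
    _ = (n + 2)! / κ ^ (n + 2) * Real.exp κ * ((1 + |s|) ^ 2)⁻¹ := by
      rw [mul_pow]
      field_simp
      ring

lemma pow_mul_cexp_neg_sq_eq_ofReal (b s : ℝ) (n : ℕ) :
    (s : ℂ) ^ n * Complex.exp (-((s : ℂ) ^ 2 * (b / 2 : ℂ))) =
      ((s ^ n * Real.exp (-(b / 2) * s ^ 2) : ℝ) : ℂ) := by
  push_cast
  ring_nf

lemma integrable_pow_mul_cexp_neg_sq {b : ℝ} (hb : 0 < b) (n : ℕ) :
    Integrable fun s : ℝ => (s : ℂ) ^ n * Complex.exp (-((s : ℂ) ^ 2 * (b / 2 : ℂ))) := by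
  simp only [pow_mul_cexp_neg_sq_eq_ofReal]
  exact (integrable_pow_mul_exp_neg_mul_sq (half_pos hb) n).ofReal

lemma integral_pow_even_mul_cexp_neg_sq {b : ℝ} (hb : 0 < b) (k : ℕ) :
    ∫ s : ℝ, (s : ℂ) ^ (2 * k) * Complex.exp (-((s : ℂ) ^ 2 * (b / 2 : ℂ))) =
      (2 * k - 1 : ℕ)‼ / b ^ k * √(2 * Real.pi / b) := by
  have hsqrt : Real.pi / (b / 2) = 2 * Real.pi / b := by field_simp
  simp only [pow_mul_cexp_neg_sq_eq_ofReal]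
  rw [integral_complex_ofReal, integral_pow_even_mul_exp_neg_mul_sq (half_pos hb),
    mul_div_cancel₀ _ two_ne_zero, hsqrt]
  push_cast
  rfl

lemma integrable_sextic_mul_cexp_neg_sq {b : ℝ} (hb : 0 < b) (c₂ c₄ c₆ : ℂ) :
    Integrable fun s : ℝ => (c₂ * s ^ 2 - c₄ * s ^ 4 + c₆ * s ^ 6) *
      Complex.exp (-((s : ℂ) ^ 2 * (b / 2 : ℂ))) := by
  have hint (c : ℂ) (n : ℕ) := (integrable_pow_mul_cexp_neg_sq hb n).const_mul c
  exact (((hint c₂ 2).sub (hint c₄ 4)).add (hint c₆ 6)).congr <| .of_forall fun s => by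
    simp only [Pi.add_apply, Pi.sub_apply]
    ring

lemma integral_sextic_mul_cexp_neg_sq {b : ℝ} (hb : 0 < b) (c₂ c₄ c₆ : ℂ) :
    ∫ s : ℝ, (c₂ * s ^ 2 - c₄ * s ^ 4 + c₆ * s ^ 6) *
        Complex.exp (-((s : ℂ) ^ 2 * (b / 2 : ℂ))) =
      (c₂ / b - 3 * c₄ / b ^ 2 + 15 * c₆ / b ^ 3) * √(2 * Real.pi / b) := by
  have hint (c : ℂ) (k : ℕ) := (integrable_pow_mul_cexp_neg_sq hb (2 * k)).const_mul c
  have hsub : Integrable fun s : ℝ =>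
      c₂ * ((s : ℂ) ^ (2 * 1) * Complex.exp (-((s : ℂ) ^ 2 * (b / 2 : ℂ)))) -
      c₄ * ((s : ℂ) ^ (2 * 2) * Complex.exp (-((s : ℂ) ^ 2 * (b / 2 : ℂ)))) :=
    (hint c₂ 1).sub (hint c₄ 2)
  calc ∫ s : ℝ, (c₂ * s ^ 2 - c₄ * s ^ 4 + c₆ * s ^ 6) *
        Complex.exp (-((s : ℂ) ^ 2 * (b / 2 : ℂ)))
      = ∫ s : ℝ, (c₂ * ((s : ℂ) ^ (2 * 1) * Complex.exp (-((s : ℂ) ^ 2 * (b / 2 : ℂ)))) -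
          c₄ * ((s : ℂ) ^ (2 * 2) * Complex.exp (-((s : ℂ) ^ 2 * (b / 2 : ℂ)))) +
          c₆ * ((s : ℂ) ^ (2 * 3) * Complex.exp (-((s : ℂ) ^ 2 * (b / 2 : ℂ))))) := by
        congr 1
        funext s
        ring
    _ = _ := by
      rw [integral_add hsub (hint c₆ 3), integral_sub (hint c₂ 1) (hint c₄ 2)]
      simp only [integral_const_mul, integral_pow_even_mul_cexp_neg_sq hb]
      norm_num [Nat.doubleFactorial]
      ring

/-! ### Laplace integrals -/

lemma norm_integral_sub_taylor_le {G : ℂ → ℝ → ℂ} {z : ℂ} {δ κ M : ℝ} (hδ : 0 < δ)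
    (hκ : 0 < κ) (hdiff : ∀ s, Differentiable ℂ fun w => G w s)
    (hmeas : ∀ w, AEStronglyMeasurable (G w))
    (hsymm : ∀ w s, G (-w) s = G w (-s))
    (hdisc : ∀ w s, ‖w‖ ≤ δ / (1 + |s|) → ‖G w s‖ ≤ M * Real.exp (-κ * |s|))
    (hz : ∀ s, ‖G z s‖ ≤ M * Real.exp (-κ * |s|))
    (hderiv : Integrable fun s => iteratedDeriv 2 (fun w => G w s) 0) :
    ‖(∫ s, G z s) - ((∫ s, G 0 s) + z ^ 2 / 2 * ∫ s, iteratedDeriv 2 (fun w => G w s) 0)‖ ≤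
      48 * M / δ ^ 4 * (∫ s : ℝ, (1 + |s|) ^ 4 * Real.exp (-κ * |s|)) * ‖z‖ ^ 4 := by
  have hdecay : Integrable fun s : ℝ => M * Real.exp (-κ * |s|) := by
    simpa using (integrable_one_add_abs_pow_mul_exp_neg hκ 0).const_mul M
  have hGz : Integrable (G z) := hdecay.mono' (hmeas z) (.of_forall hz)
  have hGnegz : Integrable (G (-z)) := by
    simpa only [funext (hsymm z)] using hGz.comp_neg
  have hG0 : Integrable (G 0) := hdecay.mono' (hmeas 0) <| .of_forall fun s =>
    hdisc 0 s (by rw [norm_zero]; positivity)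
  have hpointwise (s : ℝ) :
      ‖G z s + G (-z) s - 2 * G 0 s - z ^ 2 * iteratedDeriv 2 (fun w => G w s) 0‖ ≤
        96 * M / δ ^ 4 * ‖z‖ ^ 4 * ((1 + |s|) ^ 4 * Real.exp (-κ * |s|)) := by
    have hneg : ‖G (-z) s‖ ≤ M * Real.exp (-κ * |s|) := by
      rw [hsymm, ← abs_neg s]
      exact hz (-s)
    have hρ : 0 < δ / (1 + |s|) := by positivity
    refine (norm_add_comp_neg_sub_taylor_le hρ (hdiff s).diffContOnCl
      (fun w hw => hdisc w s (mem_sphere_zero_iff_norm.1 hw).le) (hz s) hneg).trans_eq ?_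
    field_simp
  have hsum : 2 * ((∫ s, G z s) -
      ((∫ s, G 0 s) + z ^ 2 / 2 * ∫ s, iteratedDeriv 2 (fun w => G w s) 0)) =
        ∫ s, (G z s + G (-z) s - 2 * G 0 s - z ^ 2 * iteratedDeriv 2 (fun w => G w s) 0) := by
    have hadd : Integrable fun s => G z s + G (-z) s := hGz.add hGnegz
    have hsub : Integrable fun s => G z s + G (-z) s - 2 * G 0 s := hadd.sub (hG0.const_mul 2)
    rw [integral_sub hsub (hderiv.const_mul _), integral_sub hadd (hG0.const_mul 2),
      integral_add hGz hGnegz, integral_const_mul, integral_const_mul, funext (hsymm z),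
      integral_neg_eq_self]
    ring
  have hintegral := norm_integral_le_of_norm_le
    ((integrable_one_add_abs_pow_mul_exp_neg hκ 4).const_mul _) (.of_forall hpointwise)
  rw [← hsum, norm_mul, RCLike.norm_ofNat, integral_const_mul] at hintegral
  linear_combination hintegral / 2

/-- The integrand `g (z s) exp (-s² q (z s))` obtained from the Laplace integrand
`g u exp (-x f u)` with phase `f u = u² q u` by the substitution `u = z s` with `z = x ^ (-1/2)`;
here `z` is allowed to be complex. -/
noncomputable def scaledLaplaceIntegrand (g q : ℂ → ℂ) (z : ℂ) (s : ℝ) : ℂ :=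
  g (z * s) * Complex.exp (-((s : ℂ) ^ 2 * q (z * s)))

section ScaledLaplaceIntegrand

variable {g q : ℂ → ℂ}

lemma scaledLaplaceIntegrand_neg (g q : ℂ → ℂ) (z : ℂ) (s : ℝ) :
    scaledLaplaceIntegrand g q (-z) s = scaledLaplaceIntegrand g q z (-s) := by
  simp [scaledLaplaceIntegrand]

lemma norm_scaledLaplaceIntegrand (g q : ℂ → ℂ) (z : ℂ) (s : ℝ) :
    ‖scaledLaplaceIntegrand g q z s‖ = ‖g (z * s)‖ * Real.exp (-(s ^ 2 * (q (z * s)).re)) := by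
  rw [scaledLaplaceIntegrand, norm_mul, Complex.norm_exp, Complex.neg_re, ← Complex.ofReal_pow,
    Complex.re_ofReal_mul]

lemma exists_norm_scaledLaplaceIntegrand_le_of_norm_le (hg : ContinuousAt g 0)
    (hq : ContinuousAt q 0) (hq0 : 0 < (q 0).re) :
    ∃ δ > 0, ∃ κ > 0, ∃ M, ∀ z (s : ℝ), ‖z‖ ≤ δ / (1 + |s|) →
      ‖scaledLaplaceIntegrand g q z s‖ ≤ M * Real.exp (-κ * |s|) := by
  have hgnear : ∀ᶠ w in 𝓝 0, ‖g w‖ < ‖g 0‖ + 1 := hg.norm.eventually_lt_const (lt_add_one _)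
  have hqnear : ∀ᶠ w in 𝓝 0, (q 0).re / 2 < (q w).re :=
    (Complex.continuous_re.continuousAt.comp hq).eventually_const_lt (half_lt_self hq0)
  obtain ⟨δ, hδ, hball⟩ := nhds_basis_closedBall.eventually_iff.1 (hgnear.and hqnear)
  refine ⟨δ, hδ, (q 0).re / 2, half_pos hq0, (‖g 0‖ + 1) * Real.exp ((q 0).re / 2),
    fun z s hz => ?_⟩
  have hzs : ‖z * s‖ ≤ δ := by
    rw [le_div_iff₀ (by positivity)] at hz
    rw [norm_mul, Complex.norm_real, Real.norm_eq_abs]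
    linarith [norm_nonneg z]
  obtain ⟨hgzs, hqzs⟩ := hball (mem_closedBall_zero_iff.2 hzs)
  rw [norm_scaledLaplaceIntegrand, mul_assoc, ← Real.exp_add]
  gcongr
  nlinarith [mul_le_mul_of_nonneg_left hqzs.le (sq_nonneg s), sq_abs s, sq_nonneg (|s| - 1),
    abs_nonneg s]

lemma exists_eventually_norm_scaledLaplaceIntegrand_le {A a c : ℝ} (hc : 0 < c)
    (hg : ∀ u : ℝ, ‖g u‖ ≤ A * Real.exp (a * |u|))
    (hq : ∀ u : ℝ, c * (u ^ 2 / (1 + |u|)) ≤ u ^ 2 * (q u).re) :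
    ∃ κ > 0, ∃ M, ∀ᶠ ε : ℝ in 𝓝[>] 0, ∀ s : ℝ,
      ‖scaledLaplaceIntegrand g q ε s‖ ≤ M * Real.exp (-κ * |s|) := by
  have hA : 0 ≤ A := by simpa using (norm_nonneg _).trans (hg 0)
  have hsmall : ∀ᶠ ε : ℝ in 𝓝 0, a * ε < c / 2 :=
    (by fun_prop : Continuous fun ε : ℝ => a * ε).continuousAt.eventually_lt_const (by simpa)
  refine ⟨c / 2, half_pos hc, A * Real.exp c, ?_⟩
  filter_upwards [self_mem_nhdsWithin, nhdsWithin_le_nhds hsmall,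
    nhdsWithin_le_nhds (eventually_lt_nhds one_pos)] with ε (hε : 0 < ε) hεa hε1 s
  have hgεs : ‖g (ε * s)‖ ≤ A * Real.exp (a * |ε * s|) := mod_cast hg (ε * s)
  have hqεs : c * (|s| - 1) ≤ s ^ 2 * (q (ε * s)).re := by
    have hscaled : c * (s ^ 2 / (1 + |ε * s|)) ≤ s ^ 2 * (q (ε * s)).re := by
      refine le_of_mul_le_mul_left ?_ (pow_pos hε 2)
      calc ε ^ 2 * (c * (s ^ 2 / (1 + |ε * s|)))
          = c * ((ε * s) ^ 2 / (1 + |ε * s|)) := by ring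
        _ ≤ (ε * s) ^ 2 * (q (ε * s)).re := mod_cast hq (ε * s)
        _ = ε ^ 2 * (s ^ 2 * (q (ε * s)).re) := by ring
    refine le_trans ?_ hscaled
    gcongr
    rw [le_div_iff₀ (by positivity), abs_mul, abs_of_pos hε]
    nlinarith [sq_abs s, mul_nonneg (sub_nonneg.2 hε1.le) (sq_nonneg (|s| - 1 / 2))]
  rw [norm_scaledLaplaceIntegrand]
  calc _ ≤ A * Real.exp (a * |ε * s|) * Real.exp (-(c * (|s| - 1))) := by gcongr
    _ = A * Real.exp (a * |ε * s| + -(c * (|s| - 1))) := by rw [mul_assoc, ← Real.exp_add]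
    _ ≤ A * Real.exp (c + -(c / 2) * |s|) := by
      refine mul_le_mul_of_nonneg_left (Real.exp_le_exp.2 ?_) hA
      rw [abs_mul, abs_of_pos hε]
      linear_combination |s| * hεa
    _ = _ := by rw [mul_assoc, ← Real.exp_add]

lemma differentiable_scaledLaplaceIntegrand (hg : Differentiable ℂ g) (hq : Differentiable ℂ q)
    (s : ℝ) : Differentiable ℂ fun z => scaledLaplaceIntegrand g q z s := by
  unfold scaledLaplaceIntegrand
  fun_prop

lemma continuous_scaledLaplaceIntegrand (hg : Continuous g) (hq : Continuous q) (z : ℂ) :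
    Continuous (scaledLaplaceIntegrand g q z) := by
  unfold scaledLaplaceIntegrand
  fun_prop

lemma isBigO_integral_scaledLaplaceIntegrand {A a c : ℝ} (hg : Differentiable ℂ g)
    (hq : Differentiable ℂ q) (hc : 0 < c) (hq0 : 0 < (q 0).re)
    (hgrowth : ∀ u : ℝ, ‖g u‖ ≤ A * Real.exp (a * |u|))
    (hcoercive : ∀ u : ℝ, c * (u ^ 2 / (1 + |u|)) ≤ u ^ 2 * (q u).re)
    (hderiv : Integrable fun s => iteratedDeriv 2 (scaledLaplaceIntegrand g q · s) 0) :
    (fun ε : ℝ => (∫ s, scaledLaplaceIntegrand g q ε s) -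
      ((∫ s, scaledLaplaceIntegrand g q 0 s) +
        (ε : ℂ) ^ 2 / 2 * ∫ s, iteratedDeriv 2 (scaledLaplaceIntegrand g q · s) 0))
      =O[𝓝[>] 0] fun ε => ε ^ 4 := by
  obtain ⟨δ, hδ, κ₁, hκ₁, M₁, hdisc⟩ := exists_norm_scaledLaplaceIntegrand_le_of_norm_le
    hg.continuous.continuousAt hq.continuous.continuousAt hq0
  obtain ⟨κ₂, hκ₂, M₂, hreal⟩ := exists_eventually_norm_scaledLaplaceIntegrand_le hc
    hgrowth hcoercive
  have hweaken {κ M B s : ℝ} (hκ : min κ₁ κ₂ ≤ κ) (hM : M ≤ max M₁ M₂)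
      (hB : B ≤ M * Real.exp (-κ * |s|)) (hB0 : 0 ≤ B) :
      B ≤ max M₁ M₂ * Real.exp (-min κ₁ κ₂ * |s|) := by
    have hM0 : 0 ≤ max M₁ M₂ :=
      (nonneg_of_mul_nonneg_left (hB0.trans hB) (Real.exp_pos _)).trans hM
    exact hB.trans (by gcongr)
  refine IsBigO.of_bound
    (48 * max M₁ M₂ / δ ^ 4 * ∫ s : ℝ, (1 + |s|) ^ 4 * Real.exp (-min κ₁ κ₂ * |s|))
    (hreal.mono fun ε hε => ?_)
  have hbound := norm_integral_sub_taylor_le hδ (lt_min hκ₁ hκ₂)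
    (differentiable_scaledLaplaceIntegrand hg hq)
    (fun w => (continuous_scaledLaplaceIntegrand hg.continuous hq.continuous w
      ).aestronglyMeasurable)
    (scaledLaplaceIntegrand_neg g q)
    (fun w s hw => hweaken (min_le_left _ _) (le_max_left _ _) (hdisc w s hw) (norm_nonneg _))
    (fun s => hweaken (min_le_right _ _) (le_max_right _ _) (hε s) (norm_nonneg _)) hderiv
  rwa [Complex.norm_real, ← norm_pow] at hbound

lemma iteratedDeriv_two_mul_cexp_neg (hg : Differentiable ℂ g) (hq : Differentiable ℂ q)
    (a z : ℂ) :
    iteratedDeriv 2 (fun w => g w * Complex.exp (-(a * q w))) z =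
      (iteratedDeriv 2 g z - a * (2 * deriv g z * deriv q z + g z * iteratedDeriv 2 q z) +
        a ^ 2 * (g z * deriv q z ^ 2)) * Complex.exp (-(a * q z)) := by
  have hexp (w : ℂ) : HasDerivAt (fun w => Complex.exp (-(a * q w)))
      (Complex.exp (-(a * q w)) * -(a * deriv q w)) w :=
    (((hq w).hasDerivAt.const_mul a).neg).cexp
  have hfirst : deriv (fun w => g w * Complex.exp (-(a * q w))) =
      fun w => (deriv g w - a * (g w * deriv q w)) * Complex.exp (-(a * q w)) :=
    funext fun w => ((hg w).hasDerivAt.mul (hexp w)).deriv.trans (by ring)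
  have hg' := (hg.deriv z).hasDerivAt
  have hq' := (hq.deriv z).hasDerivAt
  rw [iteratedDeriv_succ, iteratedDeriv_one, hfirst, iteratedDeriv_succ, iteratedDeriv_one,
    iteratedDeriv_succ, iteratedDeriv_one]
  refine ((hg'.sub (((hg z).hasDerivAt.mul hq').const_mul a)).mul (hexp z)).deriv.trans ?_
  simp only [Pi.sub_apply, Pi.mul_apply]
  ring

lemma iteratedDeriv_two_scaledLaplaceIntegrand (hg : Differentiable ℂ g)
    (hq : Differentiable ℂ q) (s : ℝ) :
    iteratedDeriv 2 (scaledLaplaceIntegrand g q · s) 0 =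
      (iteratedDeriv 2 g 0 * s ^ 2 -
        (2 * deriv g 0 * deriv q 0 + g 0 * iteratedDeriv 2 q 0) * s ^ 4 +
        g 0 * deriv q 0 ^ 2 * s ^ 6) * Complex.exp (-((s : ℂ) ^ 2 * q 0)) := by
  have hcomp : (scaledLaplaceIntegrand g q · s) = fun z =>
      (fun w => g w * Complex.exp (-((s : ℂ) ^ 2 * q w))) (s * z) := by
    funext z
    simp only [scaledLaplaceIntegrand, mul_comm z]
  have hcontDiff : ContDiff ℂ 2 fun w => g w * Complex.exp (-((s : ℂ) ^ 2 * q w)) :=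
    (by fun_prop : Differentiable ℂ fun w => g w * Complex.exp (-((s : ℂ) ^ 2 * q w))).contDiff
  rw [hcomp, iteratedDeriv_comp_const_mul hcontDiff]
  simp only [mul_zero, iteratedDeriv_two_mul_cexp_neg hg hq]
  ring

lemma integral_scaledLaplaceIntegrand_zero {b : ℝ} (g : ℂ → ℂ) (hb : 0 < b) (hq0 : q 0 = b / 2) :
    ∫ s, scaledLaplaceIntegrand g q 0 s = g 0 * √(2 * Real.pi / b) := by
  simp only [scaledLaplaceIntegrand, zero_mul, hq0, integral_const_mul]
  simpa using congrArg (g 0 * ·) (integral_pow_even_mul_cexp_neg_sq hb 0)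

lemma isBigO_integral_scaledLaplaceIntegrand_div {A a b c : ℝ} (hg : Differentiable ℂ g)
    (hq : Differentiable ℂ q) (hb : 0 < b) (hq0 : q 0 = b / 2) (hc : 0 < c)
    (hgrowth : ∀ u : ℝ, ‖g u‖ ≤ A * Real.exp (a * |u|))
    (hcoercive : ∀ u : ℝ, c * (u ^ 2 / (1 + |u|)) ≤ u ^ 2 * (q u).re) :
    (fun ε : ℝ => (∫ s, scaledLaplaceIntegrand g q ε s) / √(2 * Real.pi / b) -
      (g 0 + (ε : ℂ) ^ 2 / 2 * (iteratedDeriv 2 g 0 / b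
        - 3 * (2 * deriv g 0 * deriv q 0 + g 0 * iteratedDeriv 2 q 0) / b ^ 2
        + 15 * (g 0 * deriv q 0 ^ 2) / b ^ 3)))
      =O[𝓝[>] 0] fun ε => ε ^ 4 := by
  have hintegrable : Integrable fun s => iteratedDeriv 2 (scaledLaplaceIntegrand g q · s) 0 := by
    simp only [iteratedDeriv_two_scaledLaplaceIntegrand hg hq, hq0]
    exact integrable_sextic_mul_cexp_neg_sq hb _ _ _
  have hre : 0 < (q 0).re := by rw [hq0]; simpa
  have hsqrt : (√(2 * Real.pi / b) : ℂ) ≠ 0 :=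
    mod_cast (Real.sqrt_pos.2 (by positivity : 0 < 2 * Real.pi / b)).ne'
  refine ((isBigO_integral_scaledLaplaceIntegrand hg hq hc hre hgrowth hcoercive
    hintegrable).const_mul_left (√(2 * Real.pi / b) : ℂ)⁻¹).congr_left fun ε => ?_
  simp only [iteratedDeriv_two_scaledLaplaceIntegrand hg hq, hq0,
    integral_sextic_mul_cexp_neg_sq hb, integral_scaledLaplaceIntegrand_zero g hb hq0]
  field_simp

end ScaledLaplaceIntegrand

/-- The coefficient `c` in Laplace's expansion
`∫ g u exp (-x f u) du = √(2π / (f''(0) x)) (g 0 + c / x + O (x ^ (-2)))` at a nondegenerate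
minimum `0` of the phase `f`. -/
noncomputable def laplaceSecondCoeff (g f : ℂ → ℂ) : ℂ :=
  iteratedDeriv 2 g 0 / (2 * iteratedDeriv 2 f 0)
    - deriv g 0 * iteratedDeriv 3 f 0 / (2 * iteratedDeriv 2 f 0 ^ 2)
    + g 0 * (5 * iteratedDeriv 3 f 0 ^ 2 / (24 * iteratedDeriv 2 f 0 ^ 3)
      - iteratedDeriv 4 f 0 / (8 * iteratedDeriv 2 f 0 ^ 2))

lemma laplaceSecondCoeff_eq_dslope {g f : ℂ → ℂ} (hf : Differentiable ℂ f) :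
    laplaceSecondCoeff g f = (iteratedDeriv 2 g 0 / iteratedDeriv 2 f 0
      - 3 * (2 * deriv g 0 * deriv (dslope (dslope f 0) 0) 0
        + g 0 * iteratedDeriv 2 (dslope (dslope f 0) 0) 0) / iteratedDeriv 2 f 0 ^ 2
      + 15 * (g 0 * deriv (dslope (dslope f 0) 0) 0 ^ 2) / iteratedDeriv 2 f 0 ^ 3) / 2 := by
  rw [← iteratedDeriv_one (f := dslope _ _), iteratedDeriv_dslope_dslope (hf.analyticAt 0),
    iteratedDeriv_dslope_dslope (hf.analyticAt 0), laplaceSecondCoeff]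
  norm_num
  ring

lemma integral_mul_cexp_neg_eq_scaled {ε : ℝ} (hε : 0 < ε) {g f q : ℂ → ℂ}
    (hf : ∀ u, u ^ 2 * q u = f u) :
    ∫ u : ℝ, g u * Complex.exp (-(((ε ^ 2)⁻¹ : ℝ) * f u)) =
      ε * ∫ s, scaledLaplaceIntegrand g q ε s := by
  have hsubst := Measure.integral_comp_mul_left
    (fun u : ℝ => g u * Complex.exp (-(((ε ^ 2)⁻¹ : ℝ) * f u))) ε
  have hε' : (ε : ℂ) ≠ 0 := mod_cast hε.ne'
  have hintegrand : scaledLaplaceIntegrand g q ε = fun s =>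
      g ((ε * s : ℝ) : ℂ) * Complex.exp (-(((ε ^ 2)⁻¹ : ℝ) * f ((ε * s : ℝ) : ℂ))) := by
    funext s
    rw [scaledLaplaceIntegrand, ← hf]
    push_cast
    congr 3
    field_simp
  rw [hintegrand, hsubst, abs_of_pos (inv_pos.2 hε), Complex.real_smul, ← mul_assoc,
    Complex.ofReal_inv ε, mul_inv_cancel₀ hε', one_mul]

theorem isBigO_laplace_two_term {g f : ℂ → ℂ} {A a b c : ℝ} (hg : Differentiable ℂ g)
    (hf : Differentiable ℂ f) (hf0 : f 0 = 0) (hf'0 : deriv f 0 = 0)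
    (hf''0 : iteratedDeriv 2 f 0 = b) (hb : 0 < b) (hc : 0 < c)
    (hgrowth : ∀ u : ℝ, ‖g u‖ ≤ A * Real.exp (a * |u|))
    (hcoercive : ∀ u : ℝ, c * (u ^ 2 / (1 + |u|)) ≤ (f u).re) :
    (fun x : ℝ => (∫ u : ℝ, g u * Complex.exp (-(x * f u))) / √(2 * Real.pi / (b * x)) -
      (g 0 + laplaceSecondCoeff g f / x)) =O[atTop] fun x => x ^ (-2 : ℝ) := by
  set q := dslope (dslope f 0) 0 with hqdef
  have hq : Differentiable ℂ q := differentiable_dslope (differentiable_dslope hf 0) 0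
  have hqf (u : ℂ) : u ^ 2 * q u = f u := by simpa using sub_sq_smul_dslope_dslope hf0 hf'0 u
  have hq0 : q 0 = b / 2 := by
    simpa [q, hf''0] using iteratedDeriv_dslope_dslope (hf.analyticAt 0) 0
  have hcoercive' (u : ℝ) : c * (u ^ 2 / (1 + |u|)) ≤ u ^ 2 * (q u).re := by
    rw [← Complex.re_ofReal_mul, Complex.ofReal_pow, hqf]
    exact hcoercive u
  have hε : Tendsto (fun x : ℝ => (√x)⁻¹) atTop (𝓝[>] 0) :=
    tendsto_inv_atTop_nhdsGT_zero.comp Real.tendsto_sqrt_atTop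
  have hpos : ∀ᶠ x : ℝ in atTop, 0 < x := eventually_gt_atTop 0
  refine ((isBigO_integral_scaledLaplaceIntegrand_div hg hq hb hq0 hc hgrowth
    hcoercive').comp_tendsto hε).congr' (hpos.mono fun x hx => ?_) (hpos.mono fun x hx => ?_)
  · have hsq : (√x)⁻¹ ^ 2 = x⁻¹ := by rw [inv_pow, Real.sq_sqrt hx.le]
    have hsqrtx : (√x : ℂ) ≠ 0 := mod_cast (Real.sqrt_pos.2 hx).ne'
    have hrescale :=
      integral_mul_cexp_neg_eq_scaled (inv_pos.2 (Real.sqrt_pos.2 hx)) (g := g) hqf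
    rw [hsq, inv_inv] at hrescale
    simp only [Function.comp_apply, laplaceSecondCoeff_eq_dslope hf, hf''0, ← hqdef]
    rw [hrescale, ← div_div, Real.sqrt_div' _ hx.le, ← Complex.ofReal_pow, hsq]
    push_cast
    field_simp
  · simp only [Function.comp_apply]
    rw [inv_pow, show 4 = 2 * 2 from rfl, pow_mul, Real.sq_sqrt hx.le, Real.rpow_neg hx.le,
      Real.rpow_two]

/-! ### Krätzel's integral -/

lemma mellin_eq_integral_cexp_smul {E : Type*} [NormedAddCommGroup E] [NormedSpace ℂ E]
    (f : ℝ → E) (s : ℂ) :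
    mellin f s = ∫ u : ℝ, Complex.exp (s * u) • f (Real.exp u) := by
  rw [mellin, ← Real.range_exp, ← image_univ,
    integral_image_eq_integral_abs_deriv_smul MeasurableSet.univ
      (fun u _ => (Real.hasDerivAt_exp u).hasDerivWithinAt) Real.exp_injective.injOn,
    setIntegral_univ]
  congr 1
  funext u
  have hcexp : Complex.exp u ≠ 0 := Complex.exp_ne_zero _
  rw [abs_of_pos (Real.exp_pos u), ← Complex.coe_smul, smul_smul, Complex.ofReal_exp,
    Complex.cpow_sub _ _ hcexp, Complex.cpow_one, mul_div_cancel₀ _ hcexp,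
    Complex.cpow_def_of_ne_zero hcexp, ← Complex.ofReal_exp,
    ← Complex.ofReal_log (Real.exp_pos u).le, Real.log_exp, mul_comm]

/-- Krätzel's integral `F_{p,ν}(x)`. -/
noncomputable def kratzelIntegral (p : ℝ) (ν : ℂ) (x : ℝ) : ℂ :=
  ∫ t in Ioi (0 : ℝ), (t : ℂ) ^ (ν - 1) *
    Complex.exp (-((t ^ p : ℝ) : ℂ) - ((x / t : ℝ) : ℂ))

/-- The phase of Krätzel's integral in the variable `u = log (t / t₀)` centred at the saddle point
`t₀ = (x / p) ^ (1 / (p + 1))`, normalized to vanish at `0`. -/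
noncomputable def kratzelPhase (p : ℝ) (u : ℂ) : ℂ :=
  (Complex.exp (p * u) - 1) / p + Complex.exp (-u) - 1

section KratzelPhase

variable {p : ℝ}

lemma kratzelPhase_ofReal (p u : ℝ) :
    kratzelPhase p u = (((Real.exp (p * u) - 1) / p + Real.exp (-u) - 1 : ℝ) : ℂ) := by
  simp [kratzelPhase]

lemma kratzelPhase_zero (p : ℝ) : kratzelPhase p 0 = 0 := by simp [kratzelPhase]

lemma differentiable_kratzelPhase (p : ℝ) : Differentiable ℂ (kratzelPhase p) := by
  unfold kratzelPhase
  fun_prop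

lemma iteratedDeriv_kratzelPhase (hp : p ≠ 0) (n : ℕ) :
    iteratedDeriv (n + 1) (kratzelPhase p) =
      fun u => p ^ n * Complex.exp (p * u) + (-1) ^ (n + 1) * Complex.exp (-u) := by
  have hp' : (p : ℂ) ≠ 0 := mod_cast hp
  have hexp (u : ℂ) : HasDerivAt (fun u => Complex.exp (p * u)) (Complex.exp (p * u) * p) u := by
    simpa using ((hasDerivAt_id u).const_mul (p : ℂ)).cexp
  have hexpneg (u : ℂ) : HasDerivAt (fun u => Complex.exp (-u)) (-Complex.exp (-u)) u := by
    simpa using (hasDerivAt_id u).neg.cexp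
  induction n with
  | zero =>
    funext u
    rw [iteratedDeriv_one]
    refine (((((hexp u).sub_const 1).div_const (p : ℂ)).add (hexpneg u)).sub_const 1).deriv.trans ?_
    field_simp
    ring
  | succ n ih =>
    funext u
    rw [iteratedDeriv_succ, ih]
    refine (((hexp u).const_mul _).add ((hexpneg u).const_mul _)).deriv.trans ?_
    ring

lemma iteratedDeriv_kratzelPhase_zero (hp : p ≠ 0) (n : ℕ) :
    iteratedDeriv (n + 1) (kratzelPhase p) 0 = p ^ n + (-1) ^ (n + 1) := by
  simp [iteratedDeriv_kratzelPhase hp]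

lemma sq_div_le_add_exp_neg_sub_one (u : ℝ) :
    1 / 4 * (u ^ 2 / (1 + |u|)) ≤ u + Real.exp (-u) - 1 := by
  rcases le_total u 2 with hu | hu
  · have hexp : (1 - u / 2) ^ 2 ≤ Real.exp (-u) :=
      calc (1 - u / 2) ^ 2 ≤ Real.exp (-(u / 2)) ^ 2 := by
            gcongr
            · linarith
            · exact Real.one_sub_le_exp_neg _
        _ = Real.exp (-u) := by
          rw [← Real.exp_nat_mul]
          ring_nf
    have hdiv : u ^ 2 / (1 + |u|) ≤ u ^ 2 := div_le_self (sq_nonneg u) (by simp)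
    linarith
  · have hdiv : u ^ 2 / (1 + |u|) ≤ u := by
      rw [abs_of_nonneg (by linarith), div_le_iff₀ (by linarith)]
      nlinarith
    linarith [Real.exp_pos (-u)]

lemma sq_div_le_re_kratzelPhase (hp : 0 < p) (u : ℝ) :
    1 / 4 * (u ^ 2 / (1 + |u|)) ≤ (kratzelPhase p u).re := by
  have hlinear : u ≤ (Real.exp (p * u) - 1) / p := by
    rw [le_div_iff₀ hp]
    linarith [Real.add_one_le_exp (p * u)]
  rw [kratzelPhase_ofReal, Complex.ofReal_re]
  linarith [sq_div_le_add_exp_neg_sub_one u]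

lemma laplaceSecondCoeff_kratzelPhase (hp : 0 < p) (ν : ℂ) :
    laplaceSecondCoeff (fun u => Complex.exp (ν * u)) (kratzelPhase p) =
      (2 + 12 * ν ^ 2 - 12 * ν * ((p : ℂ) - 1) - 7 * p + 2 * (p : ℂ) ^ 2) /
        (24 * ((p : ℂ) + 1)) := by
  have hp1 : (p : ℂ) + 1 ≠ 0 := mod_cast (by positivity : p + 1 ≠ 0)
  rw [laplaceSecondCoeff, ← iteratedDeriv_one, iteratedDeriv_cexp_const_mul,
    iteratedDeriv_cexp_const_mul]
  simp only [iteratedDeriv_kratzelPhase_zero hp.ne', mul_zero, Complex.exp_zero]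
  norm_num
  field_simp
  ring

lemma isBigO_laplace_kratzelPhase (hp : 0 < p) (ν : ℂ) :
    (fun X : ℝ => (∫ u : ℝ, Complex.exp (ν * u) * Complex.exp (-(X * kratzelPhase p u))) /
        √(2 * Real.pi / ((p + 1) * X)) -
      (1 + (2 + 12 * ν ^ 2 - 12 * ν * ((p : ℂ) - 1) - 7 * p + 2 * (p : ℂ) ^ 2) /
        (24 * ((p : ℂ) + 1)) / X)) =O[atTop] fun X => X ^ (-2 : ℝ) := by
  have hgrowth (u : ℝ) : ‖Complex.exp (ν * u)‖ ≤ 1 * Real.exp (‖ν‖ * |u|) := by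
    simpa using Complex.norm_exp_le_exp_norm (ν * u)
  have hderiv : deriv (kratzelPhase p) 0 = 0 := by
    simpa using iteratedDeriv_kratzelPhase_zero hp.ne' 0
  have hderiv2 : iteratedDeriv 2 (kratzelPhase p) 0 = ((p + 1 : ℝ) : ℂ) := by
    simp [iteratedDeriv_kratzelPhase_zero hp.ne' 1]
  have hlaplace := isBigO_laplace_two_term (g := fun u => Complex.exp (ν * u)) (by fun_prop)
    (differentiable_kratzelPhase p) (kratzelPhase_zero p) hderiv hderiv2 (by positivity)
    (by norm_num : (0 : ℝ) < 1 / 4) hgrowth (sq_div_le_re_kratzelPhase hp)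
  simpa only [laplaceSecondCoeff_kratzelPhase hp, mul_zero, Complex.exp_zero] using hlaplace

end KratzelPhase

lemma kratzelIntegral_mul_rpow {p T : ℝ} (hp : p ≠ 0) (hT : 0 < T) (ν : ℂ) :
    kratzelIntegral p ν (p * T ^ (p + 1)) =
      (T : ℂ) ^ ν * Complex.exp (-(((p + 1) * T ^ p : ℝ) : ℂ)) *
        ∫ u : ℝ, Complex.exp (ν * u) *
          Complex.exp (-(((p * T ^ p : ℝ) : ℂ) * kratzelPhase p u)) := by
  have hTν : (T : ℂ) ^ ν ≠ 0 := by simp [Complex.cpow_eq_zero_iff, hT.ne']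
  set f : ℝ → ℂ := fun t =>
    Complex.exp (-((t ^ p : ℝ) : ℂ) - ((p * T ^ (p + 1) / t : ℝ) : ℂ)) with hf
  have hscale : kratzelIntegral p ν (p * T ^ (p + 1)) =
      (T : ℂ) ^ ν * mellin (fun t => f (T * t)) ν := by
    rw [mellin_comp_mul_left f ν hT, smul_eq_mul, Complex.cpow_neg, mul_inv_cancel_left₀ hTν]
    rfl
  have hphase (u : ℝ) : f (T * Real.exp u) = Complex.exp (-(((p + 1) * T ^ p : ℝ) : ℂ)) *
      Complex.exp (-(((p * T ^ p : ℝ) : ℂ) * kratzelPhase p u)) := by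
    simp only [hf]
    rw [kratzelPhase_ofReal, ← Complex.exp_add]
    norm_cast
    rw [Real.mul_rpow hT.le (Real.exp_pos u).le, ← Real.exp_mul, Real.rpow_add_one hT.ne',
      Real.exp_neg, mul_comm u]
    congr 1
    field_simp
    ring
  rw [hscale, mellin_eq_integral_cexp_smul, mul_assoc]
  simp only [hphase, smul_eq_mul, mul_left_comm (Complex.exp (ν * _)), integral_const_mul]

lemma kratzelIntegral_eq_laplace {p x : ℝ} (hp : 0 < p) (hx : 0 < x) (ν : ℂ) :
    kratzelIntegral p ν x =
      ((x / p : ℝ) : ℂ) ^ (ν / (p + 1 : ℝ)) *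
        Complex.exp (-(((p + 1) * (x / p) ^ (p / (p + 1)) : ℝ) : ℂ)) *
        ∫ u : ℝ, Complex.exp (ν * u) *
          Complex.exp
            (-(((p ^ (1 / (p + 1)) * x ^ (p / (p + 1)) : ℝ) : ℂ) * kratzelPhase p u)) := by
  have hp1 : p + 1 ≠ 0 := by positivity
  have hxp : 0 < x / p := by positivity
  set T := (x / p) ^ (1 / (p + 1)) with hT
  have hTpos : 0 < T := Real.rpow_pos_of_pos hxp _
  have hTp : T ^ p = (x / p) ^ (p / (p + 1)) := by
    rw [hT, ← Real.rpow_mul hxp.le, one_div_mul_eq_div]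
  have hTp1 : p * T ^ (p + 1) = x := by
    rw [hT, ← Real.rpow_mul hxp.le, one_div_mul_cancel hp1, Real.rpow_one, mul_div_cancel₀ _ hp.ne']
  have hX : p * T ^ p = p ^ (1 / (p + 1)) * x ^ (p / (p + 1)) := by
    have hsplit : p ^ (1 / (p + 1)) * p ^ (p / (p + 1)) = p := by
      rw [← Real.rpow_add hp, ← add_div, add_comm 1 p, div_self hp1, Real.rpow_one]
    rw [hTp, Real.div_rpow hx.le hp.le]
    nth_rw 1 [← hsplit]
    field_simp
  have hTν : (T : ℂ) ^ ν = ((x / p : ℝ) : ℂ) ^ (ν / (p + 1 : ℝ)) := by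
    rw [Complex.cpow_def_of_ne_zero (mod_cast hTpos.ne'),
      Complex.cpow_def_of_ne_zero (mod_cast hxp.ne'), ← Complex.ofReal_log hTpos.le,
      ← Complex.ofReal_log hxp.le, hT, Real.log_rpow hxp]
    push_cast
    congr 1
    ring
  rw [← hTν, ← hTp, ← hX, ← kratzelIntegral_mul_rpow hp.ne' hTpos, hTp1]

/-- Two-term asymptotic expansion of Krätzel's integral for `p > 0` as `x → +∞`:
with `X = p^(1/(p+1)) x^(p/(p+1))` and
`B₁ = (2 + 12ν² - 12ν(p-1) - 7p + 2p²)/(24(p+1))`,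
`F_{p,ν}(x) = L(x) (1 + B₁/X + O(X^{-2}))`, where
`L(x) = √(2π/((p+1)X)) (x/p)^(ν/(p+1)) exp(-(p+1)(x/p)^(p/(p+1)))`. -/
theorem kratzel_two_term_asymptotics (p : ℝ) (hp : 0 < p) (ν : ℂ)
    (X : ℝ → ℝ) (hX : ∀ x : ℝ, X x = p ^ (1 / (p + 1)) * x ^ (p / (p + 1)))
    (B₁ : ℂ)
    (hB₁ : B₁ = (2 + 12 * ν ^ 2 - 12 * ν * ((p : ℂ) - 1) - 7 * p + 2 * (p : ℂ) ^ 2)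
      / (24 * ((p : ℂ) + 1)))
    (L : ℝ → ℂ)
    (hL : ∀ x : ℝ, L x = (Real.sqrt (2 * Real.pi / ((p + 1) * X x)) : ℂ)
      * ((x / p : ℝ) : ℂ) ^ (ν / (p + 1 : ℝ))
      * Complex.exp (-(((p + 1) * (x / p) ^ (p / (p + 1)) : ℝ) : ℂ))) :
    (fun x : ℝ =>
      (∫ t in Ioi (0 : ℝ), (t : ℂ) ^ (ν - 1)
          * Complex.exp (-((t ^ p : ℝ) : ℂ) - ((x / t : ℝ) : ℂ))) / L x
        - (1 + B₁ / (X x : ℂ)))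
      =O[atTop] (fun x : ℝ => (X x) ^ (-2 : ℝ)) := by
  have hX_tendsto : Tendsto X atTop atTop := by
    rw [funext hX]
    exact (tendsto_rpow_atTop (by positivity)).const_mul_atTop (by positivity)
  refine ((isBigO_laplace_kratzelPhase hp ν).comp_tendsto hX_tendsto).congr' ?_ .rfl
  filter_upwards [eventually_gt_atTop 0] with x hx
  have hpow : ((x / p : ℝ) : ℂ) ^ (ν / (p + 1 : ℝ)) ≠ 0 := by
    simp [Complex.cpow_eq_zero_iff, hx.ne', hp.ne']
  have hkratzel := kratzelIntegral_eq_laplace hp hx ν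
  rw [← hX, kratzelIntegral] at hkratzel
  rw [Function.comp_apply, ← hB₁, hkratzel, hL, mul_assoc (_ : ℂ) (_ ^ _),
    mul_comm (Complex.ofReal √_), mul_div_mul_left _ _ (mul_ne_zero hpow (Complex.exp_ne_zero _))]
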